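/- Let p ∈ (1,∞), β > 0, s₀ > 0, and let μ₁(β, s₀) be defined variationally as the infimum over nonzero v ∈ W^{1,p}(0, s₀) of (∫₀^{s₀}|v'|^p ds + β|v(s₀)|^p)/(∫₀^{s₀}|v|^p ds). Then μ₁(β, s₀) ≤ (p-1)(π_p/(2s₀))^p. -/

import Mathlib

/-!
The bound is the value of the Rayleigh quotient at one trial function with `v s₀ = 0`, for which
the boundary term `β |v s₀| ^ p` disappears: the Dirichlet extremal `s ↦ sin_p (T (1 - s / s₀))`,
where `T = π_p / 2` and `sin_p` is the generalized sine, `sin_p' = (1 - sin_p ^ p) ^ (1 / p)`.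

It is convenient to work with `z = sin_p ^ p`, the inverse on `[0, T]` of the incomplete beta
integral `∫₀ˣ (1 / p) t ^ (1 / p - 1) (1 - t) ^ (-1 / p) dt`; Euler's reflection formula gives the
value `T` at `x = 1`. The derivative of `sin_p (1 - sin_p ^ p) ^ (1 - 1 / p)` is
`1 - p sin_p ^ p`, and this function vanishes at `0` and `T`, so `∫₀ᵀ z = T / p`. Hence
`∫ (1 - z) = (p - 1) ∫ z`, and the quotient is `(p - 1) (T / s₀) ^ p`.

Since `z` is differentiable only in the open interval, the trial function is written as a primitive
of the continuous function `(1 - z) ^ (1 / p)`, which makes it `C¹` without a separate analysis of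
the endpoints.
-/

open Real

/-- A separable ODE `z' = 1 / g z` on `[0, 1]`, solved by quadrature: the solution inverts the
primitive of `g`. Only integrability of `g` is assumed at the endpoints, so `z'` may vanish or blow
up there. -/
theorem exists_inverse_primitive {g : ℝ → ℝ} {T : ℝ}
    (hint : IntervalIntegrable g MeasureTheory.volume 0 1)
    (hcont : ContinuousOn g (Set.Ioo 0 1)) (hpos : ∀ x ∈ Set.Ioo (0:ℝ) 1, 0 < g x)
    (hT : T = ∫ x in (0:ℝ)..1, g x) :
    0 < T ∧ ∃ z : ℝ → ℝ, Continuous z ∧ z 0 = 0 ∧ z T = 1 ∧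
      (∀ x ∈ Set.Icc 0 T, z x ∈ Set.Icc (0:ℝ) 1) ∧
      ∀ x ∈ Set.Ioo 0 T, z x ∈ Set.Ioo (0:ℝ) 1 ∧ HasDerivAt z (g (z x))⁻¹ x := by
  classical
  -- Extending `g` by `1` outside `(0, 1)` makes the primitive an increasing bijection of `ℝ`.
  set G : ℝ → ℝ := fun x => if x ∈ Set.Ioo (0:ℝ) 1 then g x else 1 with hG
  have hGin : ∀ x ∈ Set.Ioo (0:ℝ) 1, G x = g x := fun x hx => if_pos hx
  have hGout : ∀ x, x ∉ Set.Ioo (0:ℝ) 1 → G x = 1 := fun x hx => if_neg hx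
  have hGpos : ∀ x, 0 < G x := by
    intro x
    by_cases hx : x ∈ Set.Ioo (0:ℝ) 1
    · rw [hGin x hx]; exact hpos x hx
    · rw [hGout x hx]; exact one_pos
  have hI01 : IntervalIntegrable G MeasureTheory.volume 0 1 := by
    refine hint.congr_uIoo fun x hx => ?_
    rw [Set.uIoo_of_le zero_le_one] at hx
    exact (hGin x hx).symm
  have hle : ∀ x ≤ 0, Set.EqOn (fun _ => (1:ℝ)) G (Set.uIoo 0 x) := by
    intro x hx y hy
    rw [Set.uIoo_of_ge hx] at hy
    exact (hGout y fun h => by linarith [h.1, hy.2]).symm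
  have hge : ∀ x, 1 ≤ x → Set.EqOn (fun _ => (1:ℝ)) G (Set.uIoo 1 x) := by
    intro x hx y hy
    rw [Set.uIoo_of_le hx] at hy
    exact (hGout y fun h => by linarith [h.2, hy.1]).symm
  have hIle : ∀ x ≤ 0, IntervalIntegrable G MeasureTheory.volume 0 x := fun x hx =>
    intervalIntegrable_const.congr_uIoo (hle x hx)
  have hIge : ∀ x, 1 ≤ x → IntervalIntegrable G MeasureTheory.volume 1 x := fun x hx =>
    intervalIntegrable_const.congr_uIoo (hge x hx)
  have hI0 : ∀ x, IntervalIntegrable G MeasureTheory.volume 0 x := by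
    intro x
    rcases le_total x 0 with h | h
    · exact hIle x h
    rcases le_total x 1 with h1 | h1
    · refine hI01.mono_set ?_
      rw [Set.uIcc_of_le h, Set.uIcc_of_le zero_le_one]
      exact Set.Icc_subset_Icc le_rfl h1
    · exact hI01.trans (hIge x h1)
  have hI : ∀ a b, IntervalIntegrable G MeasureTheory.volume a b := fun a b =>
    (hI0 a).symm.trans (hI0 b)
  set F : ℝ → ℝ := fun x => ∫ t in (0:ℝ)..x, G t with hF
  have hFcont : Continuous F := intervalIntegral.continuous_primitive hI 0
  have hFmono : StrictMono F := by
    intro a b hab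
    have h1 := intervalIntegral.integral_add_adjacent_intervals (hI 0 a) (hI a b)
    have h2 := intervalIntegral.intervalIntegral_pos_of_pos (hI a b) hGpos hab
    simp only [hF]
    linarith
  have hF0 : F 0 = 0 := by simp [hF]
  have hF1 : F 1 = T := by
    rw [hT]
    refine intervalIntegral.integral_congr_uIoo fun x hx => ?_
    rw [Set.uIoo_of_le zero_le_one] at hx
    exact hGin x hx
  have hFle : ∀ x ≤ 0, F x = x := by
    intro x hx
    have := intervalIntegral.integral_congr_uIoo (μ := MeasureTheory.volume) (hle x hx)
    simp only [hF, ← this]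
    simp
  have hFge : ∀ x, 1 ≤ x → F x = T + (x - 1) := by
    intro x hx
    have h1 := intervalIntegral.integral_add_adjacent_intervals (hI 0 1) (hI 1 x)
    have h2 := intervalIntegral.integral_congr_uIoo (μ := MeasureTheory.volume) (hge x hx)
    have h3 : (∫ t in (0:ℝ)..1, G t) = T := hF1
    simp only [hF, ← h1, ← h2, h3]
    simp
  have hsurj : Function.Surjective F := by
    refine hFcont.surjective ?_ ?_
    · refine Filter.tendsto_atTop.2 fun b => ?_
      filter_upwards [Filter.eventually_ge_atTop (max 1 (b - T + 1))] with x hx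
      rw [hFge x ((le_max_left _ _).trans hx)]
      linarith [(le_max_right 1 (b - T + 1)).trans hx]
    · refine Filter.tendsto_atBot.2 fun b => ?_
      filter_upwards [Filter.eventually_le_atBot (min 0 b)] with x hx
      rw [hFle x (hx.trans (min_le_left _ _))]
      exact hx.trans (min_le_right _ _)
  set e := hFmono.orderIsoOfSurjective F hsurj with he
  have heF : ∀ x, e x = F x := fun x => rfl
  have hz0 : e.symm 0 = 0 := by rw [OrderIso.symm_apply_eq, heF, hF0]
  have hzT : e.symm T = 1 := by rw [OrderIso.symm_apply_eq, heF, hF1]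
  refine ⟨by rw [← hF0, ← hF1]; exact hFmono one_pos, e.symm, e.symm.continuous, hz0, hzT, ?_, ?_⟩
  · rintro x ⟨h0, h1⟩
    have h0' := e.symm.monotone h0
    have h1' := e.symm.monotone h1
    rw [hz0] at h0'
    rw [hzT] at h1'
    exact ⟨h0', h1'⟩
  · rintro x ⟨h0, h1⟩
    have h0' := e.symm.strictMono h0
    have h1' := e.symm.strictMono h1
    rw [hz0] at h0'
    rw [hzT] at h1'
    have hmem : e.symm x ∈ Set.Ioo (0:ℝ) 1 := ⟨h0', h1'⟩
    refine ⟨hmem, ?_⟩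
    have hGc : ContinuousOn G (Set.Ioo 0 1) := hcont.congr hGin
    have hGat : ∀ y ∈ Set.Ioo (0:ℝ) 1, ContinuousAt G y := fun y hy =>
      hGc.continuousAt (isOpen_Ioo.mem_nhds hy)
    have hd : HasDerivAt F (G (e.symm x)) (e.symm x) :=
      intervalIntegral.integral_hasDerivAt_right (hI _ _)
        (ContinuousAt.stronglyMeasurableAtFilter isOpen_Ioo hGat _ hmem) (hGat _ hmem)
    rw [hGin _ hmem] at hd
    refine HasDerivAt.of_local_left_inverse e.symm.continuous.continuousAt hd (hpos _ hmem).ne' ?_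
    exact Filter.Eventually.of_forall fun y => e.apply_symm_apply y

/-- Euler's integral `B(a, 1 - a) = π / sin (π a)` over the reals. -/
theorem integral_beta_one_sub {a : ℝ} (h0 : 0 < a) (h1 : a < 1) :
    IntervalIntegrable (fun x : ℝ => a * (x ^ (a - 1) * (1 - x) ^ (-a)))
      MeasureTheory.volume 0 1 ∧
    ∫ x in (0:ℝ)..1, a * (x ^ (a - 1) * (1 - x) ^ (-a)) = a * (π / Real.sin (π * a)) := by
  have key : Set.EqOn
      (fun x : ℝ => (x : ℂ) ^ ((a : ℂ) - 1) * (1 - (x : ℂ)) ^ (((1 - a : ℝ) : ℂ) - 1))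
      (fun x : ℝ => ((x ^ (a - 1) * (1 - x) ^ (-a) : ℝ) : ℂ)) (Set.uIcc 0 1) := by
    intro x hx
    rw [Set.uIcc_of_le zero_le_one] at hx
    simp only
    push_cast
    rw [Complex.ofReal_cpow hx.1, Complex.ofReal_cpow (by linarith [hx.2])]
    push_cast
    ring_nf
  have hc := Complex.betaIntegral_convergent (u := (a : ℂ)) (v := ((1 - a : ℝ) : ℂ))
    (by simpa using h0) (by rw [Complex.ofReal_re]; linarith)
  have hB := ProbabilityTheory.beta_eq_betaIntegralReal a (1 - a) h0 (by linarith)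
  rw [Complex.betaIntegral, intervalIntegral.integral_congr key, intervalIntegral.integral_ofReal,
    Complex.ofReal_re, ProbabilityTheory.beta, Real.Gamma_mul_Gamma_one_sub] at hB
  have hi : IntervalIntegrable (fun x : ℝ => x ^ (a - 1) * (1 - x) ^ (-a))
      MeasureTheory.volume 0 1 := by
    refine hc.norm.congr_uIoo fun x hx => ?_
    rw [Set.uIoo_of_le zero_le_one] at hx
    have hx' : x ∈ Set.uIcc (0:ℝ) 1 := by
      rw [Set.uIcc_of_le zero_le_one]; exact Set.Ioo_subset_Icc_self hx
    have hk := key hx'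
    simp only at hk ⊢
    rw [hk, Complex.norm_real, Real.norm_of_nonneg]
    exact mul_nonneg (Real.rpow_nonneg hx.1.le _) (Real.rpow_nonneg (by linarith [hx.2]) _)
  refine ⟨hi.const_mul a, ?_⟩
  rw [intervalIntegral.integral_const_mul, ← hB]
  simp

/-- The profile of the Dirichlet extremal. With `a = 1 / p`, `z` is the `p`-th power of the
generalized sine `z ^ a`, which satisfies `(z ^ a)' = (1 - z) ^ a` on `[0, T]`, and `T = π_p / 2`.
The last identity, `∫ |(z ^ a)'| ^ p = (p - 1) ∫ |z ^ a| ^ p` in disguise, is the integral of the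
derivative of `z ^ a * (1 - z) ^ (1 - a)`, which vanishes at both ends. -/
theorem exists_profile {a T : ℝ} (h0 : 0 < a) (h1 : a < 1)
    (hT : T = a * (π / Real.sin (π * a))) :
    0 < T ∧ ∃ z : ℝ → ℝ, Continuous z ∧
      (∀ x ∈ Set.Icc 0 T, z x ∈ Set.Icc (0:ℝ) 1) ∧ (∀ x ∈ Set.Ioo 0 T, 0 < z x) ∧
      (∀ x ∈ Set.Icc 0 T, ∫ t in (0:ℝ)..x, (1 - z t) ^ a = z x ^ a) ∧
      ∫ x in (0:ℝ)..T, z x = a * T := by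
  obtain ⟨hi, hv⟩ := integral_beta_one_sub h0 h1
  have hcont : ContinuousOn (fun x : ℝ => a * (x ^ (a - 1) * (1 - x) ^ (-a))) (Set.Ioo 0 1) := by
    refine continuousOn_const.mul (ContinuousOn.mul ?_ ?_)
    · exact continuousOn_id.rpow_const fun x hx => Or.inl hx.1.ne'
    · exact (continuousOn_const.sub continuousOn_id).rpow_const fun x hx =>
        Or.inl (sub_pos.2 hx.2).ne'
  have hpos : ∀ x ∈ Set.Ioo (0:ℝ) 1, 0 < a * (x ^ (a - 1) * (1 - x) ^ (-a)) := fun x hx =>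
    mul_pos h0 (mul_pos (Real.rpow_pos_of_pos hx.1 _) (Real.rpow_pos_of_pos (sub_pos.2 hx.2) _))
  obtain ⟨hTpos, z, hzc, hz0, hzT, hzI, hzd⟩ :=
    exists_inverse_primitive hi hcont hpos (hT.trans hv.symm)
  have hyc : Continuous fun x => z x ^ a := hzc.rpow_const fun _ => Or.inr h0.le
  have hwc : Continuous fun x => (1 - z x) ^ a :=
    (continuous_const.sub hzc).rpow_const fun _ => Or.inr h0.le
  have hyd : ∀ x ∈ Set.Ioo 0 T, HasDerivAt (fun x => z x ^ a) ((1 - z x) ^ a) x := by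
    intro x hx
    obtain ⟨⟨hl, hr⟩, hd⟩ := hzd x hx
    have hr' : 0 < 1 - z x := sub_pos.2 hr
    convert hd.rpow_const (p := a) (Or.inl hl.ne') using 1
    rw [Real.rpow_neg hr'.le]
    have := (Real.rpow_pos_of_pos hl (a - 1)).ne'
    have := (Real.rpow_pos_of_pos hr' a).ne'
    field_simp
  have hwd : ∀ x ∈ Set.Ioo 0 T, HasDerivAt (fun x => z x ^ a * (1 - z x) ^ (1 - a))
      (1 - a⁻¹ * z x) x := by
    intro x hx
    obtain ⟨⟨hl, hr⟩, hd⟩ := hzd x hx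
    have hr' : 0 < 1 - z x := sub_pos.2 hr
    have h2 := (hd.const_sub 1).rpow_const (p := 1 - a) (Or.inl hr'.ne')
    refine ((hyd x hx).mul h2).congr_deriv ?_
    have e1 : (1 - z x) ^ (1 - a) = (1 - z x) / (1 - z x) ^ a := by
      rw [Real.rpow_sub hr', Real.rpow_one]
    have e2 : (1 - z x) ^ (1 - a - 1) = ((1 - z x) ^ a)⁻¹ := by
      rw [← Real.rpow_neg hr'.le]; congr 1; ring
    have e3 : z x ^ (a - 1) = z x ^ a / z x := by
      rw [Real.rpow_sub hl, Real.rpow_one]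
    rw [e1, e2, e3, Real.rpow_neg hr'.le]
    have := (Real.rpow_pos_of_pos hl a).ne'
    have := (Real.rpow_pos_of_pos hr' a).ne'
    field_simp
    ring
  refine ⟨hTpos, z, hzc, hzI, fun x hx => (hzd x hx).1.1, ?_, ?_⟩
  · intro x hx
    rw [intervalIntegral.integral_eq_sub_of_hasDerivAt_of_le hx.1 hyc.continuousOn
      (fun t ht => hyd t ⟨ht.1, ht.2.trans_le hx.2⟩) (hwc.intervalIntegrable _ _), hz0,
      Real.zero_rpow h0.ne', sub_zero]
  · have hc2 : Continuous fun x => z x ^ a * (1 - z x) ^ (1 - a) :=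
      hyc.mul ((continuous_const.sub hzc).rpow_const fun _ => Or.inr (by linarith))
    have hE := intervalIntegral.integral_eq_sub_of_hasDerivAt_of_le hTpos.le hc2.continuousOn hwd
      ((continuous_const.sub (continuous_const.mul hzc)).intervalIntegrable _ _)
    rw [intervalIntegral.integral_sub (continuous_const.intervalIntegrable _ _)
      ((hzc.intervalIntegrable _ _).const_mul _), intervalIntegral.integral_const_mul, hz0,
      hzT, Real.zero_rpow h0.ne', sub_self, Real.zero_rpow (by linarith)] at hE
    simp only [intervalIntegral.integral_const, sub_zero, smul_eq_mul, mul_one, mul_zero,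
      zero_mul] at hE
    field_simp at hE
    linarith

theorem mu1_upper_bound (p : ℝ) (hp : 1 < p) (β s₀ : ℝ) (hβ : 0 < β) (hs₀ : 0 < s₀)
    (πp : ℝ) (hπp : πp = 2 * π / (p * Real.sin (π / p)))
    (μ₁ : ℝ)
    (hμ₁ : μ₁ = sInf {r : ℝ | ∃ v : ℝ → ℝ, ContDiffOn ℝ 1 v (Set.Icc 0 s₀) ∧
      (0 < ∫ s in (0:ℝ)..s₀, |v s| ^ p) ∧
      r = ((∫ s in (0:ℝ)..s₀, |deriv v s| ^ p) + β * |v s₀| ^ p) /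
          (∫ s in (0:ℝ)..s₀, |v s| ^ p)}) :
    μ₁ ≤ (p - 1) * (πp / (2 * s₀)) ^ p := by
  have hp0 : 0 < p := by linarith
  obtain ⟨hT, z, hzc, hzI, hzpos, hV, hint⟩ :=
    exists_profile (inv_pos.2 hp0) (inv_lt_one_of_one_lt₀ hp) (T := πp / 2) (by
      rw [hπp, ← div_eq_mul_inv]
      ring)
  set T := πp / 2 with hTdef
  set c := T / s₀ with hc
  have hcpos : 0 < c := div_pos hT hs₀
  have hcs : c * s₀ = T := by rw [hc]; field_simp
  have hc' : πp / (2 * s₀) = c := by rw [hc, hTdef]; field_simp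
  set h : ℝ → ℝ := fun t => (1 - z t) ^ p⁻¹ with hh
  have hhc : Continuous h :=
    (continuous_const.sub hzc).rpow_const fun _ => Or.inr (inv_pos.2 hp0).le
  set v : ℝ → ℝ := fun s => ∫ t in (0:ℝ)..(T - c * s), h t with hv
  have hvd : ∀ s, HasDerivAt v (h (T - c * s) * (-c)) s := by
    intro s
    have h1 : HasDerivAt (fun s : ℝ => T - c * s) (-c) s := by
      simpa using ((hasDerivAt_id s).const_mul c).const_sub T
    exact (hhc.integral_hasStrictDerivAt 0 (T - c * s)).hasDerivAt.comp s h1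
  have hderiv : deriv v = fun s => h (T - c * s) * (-c) := funext fun s => (hvd s).deriv
  have hvC : ContDiff ℝ 1 v := by
    rw [contDiff_one_iff_deriv, hderiv]
    exact ⟨fun s => (hvd s).differentiableAt, by fun_prop⟩
  have hmem : ∀ s ∈ Set.Icc 0 s₀, T - c * s ∈ Set.Icc 0 T := by
    rintro s ⟨ha, hb⟩
    have := mul_nonneg hcpos.le ha
    have := mul_le_mul_of_nonneg_left hb hcpos.le
    constructor <;> linarith
  have hint1 : ∫ s in (0:ℝ)..s₀, |v s| ^ p = c⁻¹ * (p⁻¹ * T) := by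
    have : Set.EqOn (fun s => |v s| ^ p) (fun s => z (T - c * s)) (Set.uIcc 0 s₀) := by
      intro s hs
      rw [Set.uIcc_of_le hs₀.le] at hs
      have hm := hmem s hs
      have hz := (hzI _ hm).1
      simp only [hv, hh]
      rw [hV _ hm, abs_of_nonneg (Real.rpow_nonneg hz _), Real.rpow_inv_rpow hz hp0.ne']
    rw [intervalIntegral.integral_congr this, intervalIntegral.integral_comp_sub_mul _ hcpos.ne',
      hcs, mul_zero, sub_self, sub_zero, hint, smul_eq_mul]
  have hint2 : ∫ s in (0:ℝ)..s₀, |deriv v s| ^ p = c ^ p * (c⁻¹ * (T - p⁻¹ * T)) := by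
    have : Set.EqOn (fun s => |deriv v s| ^ p) (fun s => c ^ p * (1 - z (T - c * s)))
        (Set.uIcc 0 s₀) := by
      intro s hs
      rw [Set.uIcc_of_le hs₀.le] at hs
      have hz : 0 ≤ 1 - z (T - c * s) := sub_nonneg.2 (hzI _ (hmem s hs)).2
      simp only [hderiv, hh]
      rw [abs_mul, abs_neg, abs_of_pos hcpos, abs_of_nonneg (Real.rpow_nonneg hz _),
        Real.mul_rpow (Real.rpow_nonneg hz _) hcpos.le, Real.rpow_inv_rpow hz hp0.ne', mul_comm]
    rw [intervalIntegral.integral_congr this, intervalIntegral.integral_const_mul,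
      intervalIntegral.integral_comp_sub_mul (fun x => 1 - z x) hcpos.ne', hcs, mul_zero, sub_self,
      sub_zero, intervalIntegral.integral_sub (continuous_const.intervalIntegrable _ _)
      (hzc.intervalIntegrable _ _), hint]
    simp
  have hvs : v s₀ = 0 := by simp [hv, hcs]
  rw [hμ₁, hc']
  refine csInf_le ⟨0, ?_⟩ ⟨v, hvC.contDiffOn, ?_, ?_⟩
  · rintro r ⟨w, -, hw, rfl⟩
    have : 0 ≤ ∫ s in (0:ℝ)..s₀, |deriv w s| ^ p :=
      intervalIntegral.integral_nonneg hs₀.le fun s _ => by positivity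
    positivity
  · rw [hint1]; positivity
  · rw [hint1, hint2, hvs, abs_zero, Real.zero_rpow hp0.ne', mul_zero, add_zero]
    field_simp
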